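/- Let S be a finite set with |S| = n ≥ 2, let P and Q be row-stochastic matrices, γ ∈ [0,1), c : S → ℝ, and set v* = (I − γP)⁻¹ c and v = (I − γQ)⁻¹ c. For each s ∈ S, let e_s : Fin n → S be a bijection such that i ↦ v*(e_s(i)) is nonincreasing, and define F_P(s,i) = ∑_{j ≤ i} P(s, e_s(j)) and F_Q(s,i) = ∑_{j ≤ i} Q(s, e_s(j)). Assume F_P(s,i) ≥ F_Q(s,i) for every s ∈ S and every i. Define f(s,i) = (F_P(s,i) − F_Q(s,i))·(v*(e_s(i)) − v*(e_s(i+1))) for i + 1 < n, and let f̂ = max over all s ∈ S and i with i + 1 < n of f(s,i). Then ‖v* − v‖∞ ≤ (γ·n/(1−γ)) · f̂. -/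

import Mathlib

open Matrix

/-!
Write `Δ = P - Q`. Subtracting the fixed-point equations `v* = c + γ P v*` and `v = c + γ Q v` gives
`v* - v = γ Δ v* + γ Q (v* - v)`, and `Q` does not increase the sup norm, so
`(1 - γ) ‖v* - v‖ ≤ γ ‖Δ v*‖`. The entries of each row of `Δ` sum to zero, so summation by parts
along the enumeration `e s` writes `(Δ v*) s` as the sum of the `n - 1` potentials `f(s, i)`,
each of absolute value at most `f̂`.
-/

section Potential

lemma sum_smul_by_parts {R M : Type*} [Ring R] [AddCommGroup M] [Module R M] {n : ℕ}
    (a : Fin (n + 1) → R) (w : Fin (n + 1) → M) :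
    ∑ i, a i • w i = (∑ i, a i) • w (Fin.last n) +
      ∑ i : Fin n, (∑ j ∈ Finset.Iic i.castSucc, a j) • (w i.castSucc - w i.succ) := by
  induction n with
  | zero => simp
  | succ n ih =>
    have prefix_last :
        ∑ j ∈ Finset.Iic (Fin.last n), a (Fin.castSucc j) = ∑ j, a (Fin.castSucc j) := by
      rw [← Fin.top_eq_last, Finset.Iic_top]
    rw [Fin.sum_univ_castSucc, ih (fun i ↦ a i.castSucc) (fun i ↦ w i.castSucc),
      Fin.sum_univ_castSucc (f := a), Fin.sum_univ_castSucc (n := n) (f := fun i : Fin (n + 1) ↦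
        (∑ j ∈ Finset.Iic i.castSucc, a j) • (w i.castSucc - w i.succ))]
    simp only [Fin.sum_Iic_castSucc, prefix_last, Fin.succ_castSucc, Fin.succ_last]
    rw [add_smul, smul_sub (∑ j, a (Fin.castSucc j))]
    abel

variable {R S : Type*} {n : ℕ}

/-- The potential `f(s, i)` of the position `i`, where `p` and `q` are the rows of `P` and `Q` at
`s`, `w` is the value `v*`, and `e` enumerates the successors of `s`. The positions are indexed by
`Fin n`, where `|S| = n + 1`, so that each of them has a next one. -/
def potential [Ring R] (p q w : S → R) (e : Fin (n + 1) ≃ S) (i : Fin n) : R :=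
  (∑ j ∈ Finset.Iic i.castSucc, p (e j) - ∑ j ∈ Finset.Iic i.castSucc, q (e j)) *
    (w (e i.castSucc) - w (e i.succ))

lemma potential_nonneg [Ring R] [PartialOrder R] [IsOrderedRing R] {p q w : S → R}
    {e : Fin (n + 1) ≃ S} {i : Fin n}
    (hpq : ∑ j ∈ Finset.Iic i.castSucc, q (e j) ≤ ∑ j ∈ Finset.Iic i.castSucc, p (e j))
    (hw : w (e i.succ) ≤ w (e i.castSucc)) : 0 ≤ potential p q w e i :=
  mul_nonneg (sub_nonneg.2 hpq) (sub_nonneg.2 hw)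

lemma sum_potential [Fintype S] [Ring R] {p q : S → R} (hpq : ∑ t, p t = ∑ t, q t) (w : S → R)
    (e : Fin (n + 1) ≃ S) : ∑ i, potential p q w e i = (p - q) ⬝ᵥ w := by
  have total_eq_zero : ∑ i, (p - q) (e i) = 0 := by
    rw [e.sum_comp (p - q)]
    simp only [Pi.sub_apply, Finset.sum_sub_distrib, hpq, sub_self]
  have by_parts := sum_smul_by_parts (fun i ↦ (p - q) (e i)) (fun i ↦ w (e i))
  rw [total_eq_zero, zero_smul, zero_add] at by_parts
  simp only [smul_eq_mul, Pi.sub_apply, Finset.sum_sub_distrib] at by_parts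
  rw [dotProduct, ← e.sum_comp]
  exact by_parts.symm

lemma norm_sub_mulVec_le_of_norm_potential_le {T : Type*} [Fintype S] [Fintype T] [SeminormedRing R]
    {P Q : Matrix T S R} (hPQ : ∀ s, ∑ t, P s t = ∑ t, Q s t) {w : S → R}
    (e : T → Fin (n + 1) ≃ S) {M : ℝ} (hM₀ : 0 ≤ M)
    (hM : ∀ s i, ‖potential (P s) (Q s) w (e s) i‖ ≤ M) : ‖(P - Q) *ᵥ w‖ ≤ n * M := by
  refine (pi_norm_le_iff_of_nonneg (by positivity)).2 fun s ↦ ?_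
  calc ‖((P - Q) *ᵥ w) s‖ = ‖∑ i, potential (P s) (Q s) w (e s) i‖ :=
        congrArg norm (sum_potential (hPQ s) w (e s)).symm
    _ ≤ ∑ _i : Fin n, M := norm_sum_le_of_le _ fun i _ ↦ hM s i
    _ = n * M := by simp

end Potential

section Resolvent

lemma norm_smul_le_of_norm_le_one {𝕜 E : Type*} [NormedField 𝕜] [SeminormedAddCommGroup E]
    [NormedSpace 𝕜 E] (γ : 𝕜) {x : E} (hx : ‖x‖ ≤ 1) : ‖γ • x‖ ≤ ‖γ‖ :=
  (norm_smul_le γ x).trans (mul_le_of_le_one_right (norm_nonneg γ) hx)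

lemma isUnit_one_sub_smul {𝕜 A : Type*} [NormedField 𝕜] [NormedRing A] [NormedAlgebra 𝕜 A]
    [CompleteSpace A] {γ : 𝕜} (hγ : ‖γ‖ < 1) {a : A} (ha : ‖a‖ ≤ 1) : IsUnit (1 - γ • a) :=
  isUnit_one_sub_of_norm_lt_one ((norm_smul_le_of_norm_le_one γ ha).trans_lt hγ)

-- The norm of a matrix is its `ℓ^∞` operator norm, the maximal absolute row sum.
open scoped Matrix.Norms.Operator

variable {S : Type*} [Fintype S]

lemma norm_sub_le_div_of_eq_add_mulVec {R : Type*} [NonUnitalSeminormedRing R]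
    {A B : Matrix S S R} {c x y : S → R} (hB : ‖B‖ < 1) (hx : x = c + A *ᵥ x)
    (hy : y = c + B *ᵥ y) : ‖x - y‖ ≤ ‖(A - B) *ᵥ x‖ / (1 - ‖B‖) := by
  have sub_eq : x - y = (A - B) *ᵥ x + B *ᵥ (x - y) := by
    calc x - y = (c + A *ᵥ x) - (c + B *ᵥ y) := by rw [← hx, ← hy]
      _ = (A - B) *ᵥ x + B *ᵥ (x - y) := by rw [sub_mulVec, mulVec_sub]; abel
  have norm_le : ‖x - y‖ ≤ ‖(A - B) *ᵥ x‖ + ‖B‖ * ‖x - y‖ := by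
    calc ‖x - y‖ = ‖(A - B) *ᵥ x + B *ᵥ (x - y)‖ := congrArg norm sub_eq
      _ ≤ ‖(A - B) *ᵥ x‖ + ‖B *ᵥ (x - y)‖ := norm_add_le _ _
      _ ≤ ‖(A - B) *ᵥ x‖ + ‖B‖ * ‖x - y‖ := by gcongr; exact linfty_opNorm_mulVec B (x - y)
  rw [le_div_iff₀ (sub_pos.2 hB)]
  linarith

variable [DecidableEq S]

lemma inv_one_sub_mulVec_eq_add {R : Type*} [CommRing R] {A : Matrix S S R}
    (hA : IsUnit (1 - A)) (c : S → R) :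
    (1 - A)⁻¹ *ᵥ c = c + A *ᵥ ((1 - A)⁻¹ *ᵥ c) := by
  have cancel : (1 - A) *ᵥ ((1 - A)⁻¹ *ᵥ c) = c := by
    rw [mulVec_mulVec, mul_nonsing_inv _ ((isUnit_iff_isUnit_det _).1 hA), one_mulVec]
  rwa [sub_mulVec, one_mulVec, sub_eq_iff_eq_add] at cancel

lemma norm_le_one_of_mem_rowStochastic {P : Matrix S S ℝ} (hP : P ∈ rowStochastic ℝ S) :
    ‖P‖ ≤ 1 := by
  rw [linfty_opNorm_def, NNReal.coe_le_one]
  refine Finset.sup_le fun s _ ↦ ?_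
  rw [← NNReal.coe_le_one, NNReal.coe_sum]
  simp only [coe_nnnorm, Real.norm_of_nonneg (nonneg_of_mem_rowStochastic hP),
    sum_row_of_mem_rowStochastic hP, le_refl]

lemma isUnit_one_sub_smul_of_mem_rowStochastic {γ : ℝ} (hγ : |γ| < 1) {P : Matrix S S ℝ}
    (hP : P ∈ rowStochastic ℝ S) : IsUnit (1 - γ • P) :=
  isUnit_one_sub_smul hγ (norm_le_one_of_mem_rowStochastic hP)

theorem potential_upper_bound_rmc_general {n : ℕ} {P Q : Matrix S S ℝ} {γ : ℝ}
    (hP : IsUnit (1 - γ • P)) (hQ : ‖Q‖ ≤ 1) (hPQ : ∀ s, ∑ t, P s t = ∑ t, Q s t)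
    (hγ : |γ| < 1) {c vstar v : S → ℝ} (hvstar : vstar = (1 - γ • P)⁻¹ *ᵥ c)
    (hv : v = (1 - γ • Q)⁻¹ *ᵥ c) (e : S → Fin (n + 1) ≃ S) {M : ℝ} (hM₀ : 0 ≤ M)
    (hM : ∀ s i, |potential (P s) (Q s) vstar (e s) i| ≤ M) :
    ‖vstar - v‖ ≤ |γ| * n / (1 - |γ|) * M := by
  have hγQ : ‖γ • Q‖ ≤ |γ| := norm_smul_le_of_norm_le_one γ hQ
  have vstar_eq : vstar = c + (γ • P) *ᵥ vstar := hvstar ▸ inv_one_sub_mulVec_eq_add hP c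
  have v_eq : v = c + (γ • Q) *ᵥ v :=
    hv ▸ inv_one_sub_mulVec_eq_add (isUnit_one_sub_smul hγ hQ) c
  calc ‖vstar - v‖ ≤ ‖(γ • P - γ • Q) *ᵥ vstar‖ / (1 - ‖γ • Q‖) :=
        norm_sub_le_div_of_eq_add_mulVec (hγQ.trans_lt hγ) vstar_eq v_eq
    _ = |γ| * ‖(P - Q) *ᵥ vstar‖ / (1 - ‖γ • Q‖) := by
        rw [← smul_sub, smul_mulVec, norm_smul, Real.norm_eq_abs]
    _ ≤ |γ| * (n * M) / (1 - |γ|) := by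
        have := sub_pos.2 hγ
        gcongr
        exact norm_sub_mulVec_le_of_norm_potential_le hPQ e hM₀ hM
    _ = |γ| * n / (1 - |γ|) * M := by ring

end Resolvent

/-- Upper bound on the value gap by the worst-case potential:
if `v* = (I-γP)⁻¹ c`, `v = (I-γQ)⁻¹ c`, the successors are ordered by descending `v*`
via the bijections `e s`, cumulative probabilities satisfy `F_P(s,i) ≥ F_Q(s,i)`, and
`f̂` is the maximum of `f(s,i) = (F_P(s,i) − F_Q(s,i))(v*(e_s i) − v*(e_s (i+1)))`,
then `‖v* − v‖∞ ≤ (γ n / (1−γ)) f̂`. -/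
theorem potential_upper_bound_rmc {S : Type*} [Fintype S] [DecidableEq S]
    (n : ℕ) (hn : 2 ≤ n) (hcard : Fintype.card S = n)
    (P Q : Matrix S S ℝ)
    (hPnonneg : ∀ s t, 0 ≤ P s t) (hProw : ∀ s, ∑ t, P s t = 1)
    (hQnonneg : ∀ s t, 0 ≤ Q s t) (hQrow : ∀ s, ∑ t, Q s t = 1)
    (γ : ℝ) (hγ0 : 0 ≤ γ) (hγ1 : γ < 1)
    (c : S → ℝ)
    (vstar v : S → ℝ)
    (hvstar : vstar = (1 - γ • P)⁻¹ *ᵥ c)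
    (hv : v = (1 - γ • Q)⁻¹ *ᵥ c)
    (e : S → (Fin n ≃ S))
    (hmono : ∀ s : S, ∀ i j : Fin n, i ≤ j → vstar (e s j) ≤ vstar (e s i))
    (hF : ∀ s : S, ∀ i : Fin n,
      ∑ j ∈ Finset.Iic i, Q s (e s j) ≤ ∑ j ∈ Finset.Iic i, P s (e s j))
    (fhat : ℝ)
    (hfhat : IsGreatest {x : ℝ | ∃ s : S, ∃ i : Fin n, ∃ h : (i : ℕ) + 1 < n,
        x = ((∑ j ∈ Finset.Iic i, P s (e s j)) - ∑ j ∈ Finset.Iic i, Q s (e s j))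
            * (vstar (e s i) - vstar (e s ⟨(i : ℕ) + 1, h⟩))} fhat) :
    ‖vstar - v‖ ≤ γ * n / (1 - γ) * fhat := by
  obtain ⟨m, rfl⟩ : ∃ m, n = m + 1 := Nat.exists_eq_add_of_le' (one_le_two.trans hn)
  have hγ : |γ| < 1 := (abs_of_nonneg hγ0).trans_lt hγ1
  have hP : P ∈ rowStochastic ℝ S := mem_rowStochastic_iff_sum.2 ⟨hPnonneg, hProw⟩
  have hQ : Q ∈ rowStochastic ℝ S := mem_rowStochastic_iff_sum.2 ⟨hQnonneg, hQrow⟩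
  have f_nonneg (s : S) (i : Fin m) : 0 ≤ potential (P s) (Q s) vstar (e s) i :=
    potential_nonneg (hF s _) (hmono s _ _ i.castSucc_lt_succ.le)
  have f_le (s : S) (i : Fin m) : potential (P s) (Q s) vstar (e s) i ≤ fhat :=
    hfhat.2 ⟨s, i.castSucc, by simp, rfl⟩
  have fhat_nonneg : 0 ≤ fhat := by
    obtain ⟨s, i, h, -⟩ := hfhat.1
    exact (f_nonneg s ⟨i, by omega⟩).trans (f_le s _)
  have bound : ‖vstar - v‖ ≤ |γ| * m / (1 - |γ|) * fhat :=
    potential_upper_bound_rmc_general (isUnit_one_sub_smul_of_mem_rowStochastic hγ hP)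
      (norm_le_one_of_mem_rowStochastic hQ) (fun s ↦ (hProw s).trans (hQrow s).symm) hγ hvstar hv
      e fhat_nonneg fun s i ↦ (abs_of_nonneg (f_nonneg s i)).trans_le (f_le s i)
  rw [abs_of_nonneg hγ0] at bound
  have := sub_pos.2 hγ1
  exact bound.trans (by gcongr; exact m.le_succ)
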